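/- Let G be a finite simple graph and ℓ ≥ 1. A set B ⊆ V(G) is an ℓ-edge-leaky forcing set if and only if B is an (ℓ−1)-leaky forcing set (with respect to vertex leaks) such that for every set L of ℓ−1 vertex leaks and every vertex v ∈ V(G) \ B, there exist two distinct vertices x ≠ y with x→v ∈ ℱ_L(B) and y→v ∈ ℱ_L(B). -/

import Mathlib

/-!
Zero forcing with leaks (vertex leaks, edge leaks, specified leaks, mixed leaks).

A force `u → v` is modelled as the ordered pair `(u, v) : V × V`.  All the
leak notions are encoded by a set `P` of *prohibited* forces.
-/

variable {V : Type*}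

/-- With blue set `S` and prohibited set of forces `P`, vertex `u` can force `v`:
`u` is blue, `v` is a white neighbor of `u`, every other neighbor of `u` is blue,
and the force `u → v` is not prohibited. -/
def CanForce (G : SimpleGraph V) (P : Set (V × V)) (S : Set V) (u v : V) : Prop :=
  u ∈ S ∧ v ∉ S ∧ G.Adj u v ∧ (∀ w, G.Adj u w → w ≠ v → w ∈ S) ∧ (u, v) ∉ P

/-- `Forced G P B v` means vertex `v` is eventually colored blue when the zero
forcing color change rule (avoiding the prohibited forces `P`) is applied
exhaustively starting from the blue set `B`. -/
inductive Forced (G : SimpleGraph V) (P : Set (V × V)) (B : Set V) : V → Prop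
  | init : ∀ {v : V}, v ∈ B → Forced G P B v
  | force : ∀ {u v : V}, G.Adj u v → (u, v) ∉ P → Forced G P B u →
      (∀ w, G.Adj u w → w ≠ v → Forced G P B w) → Forced G P B v

/-- `B^[∞]_P`, the set of blue vertices after exhaustively applying the zero
forcing rule with prohibited forces `P`, starting from `B`. -/
def closureSet (G : SimpleGraph V) (P : Set (V × V)) (B : Set V) : Set V :=
  {v | Forced G P B v}

/-- The prohibited forces corresponding to a set `L` of vertex leaks: a vertex
leak may not perform any force. -/
def vertexLeaks (L : Set V) : Set (V × V) := {p | p.1 ∈ L}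

/-- The prohibited forces corresponding to a set `L` of edge leaks: no force may
pass across an edge leak in either direction. -/
def edgeLeaksP (L : Set (Sym2 V)) : Set (V × V) := {p | s(p.1, p.2) ∈ L}

/-- `B` is an `ℓ`-leaky forcing set of `G`: despite any set of (at most) `ℓ`
vertex leaks, exhaustive forcing colors all of `V(G)` blue. -/
def IsLeakyForcingSet (G : SimpleGraph V) (ℓ : ℕ) (B : Set V) : Prop :=
  ∀ L : Finset V, L.card ≤ ℓ → closureSet G (vertexLeaks ↑L) B = Set.univ

/-- `B` is an `ℓ`-edge-leaky forcing set of `G`: despite any set of (at most)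
`ℓ` edge leaks, exhaustive forcing colors all of `V(G)` blue. -/
def IsEdgeLeakyForcingSet (G : SimpleGraph V) (ℓ : ℕ) (B : Set V) : Prop :=
  ∀ L : Finset (Sym2 V), ↑L ⊆ G.edgeSet → L.card ≤ ℓ →
    closureSet G (edgeLeaksP ↑L) B = Set.univ

/-- `B` is a specified `ℓ`-leaky forcing set of `G`: despite any set of (at
most) `ℓ` specified leaks (prohibited forces between adjacent vertices),
exhaustive forcing colors all of `V(G)` blue. -/
def IsSpecifiedLeakyForcingSet (G : SimpleGraph V) (ℓ : ℕ) (B : Set V) : Prop :=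
  ∀ L : Finset (V × V), (∀ p ∈ L, G.Adj p.1 p.2) → L.card ≤ ℓ →
    closureSet G (↑L) B = Set.univ

/-- `B` is a mixed `ℓ`-leaky forcing set of `G`: despite any set of (at most)
`ℓ` leaks, each a vertex leak, an edge leak, or a specified leak, exhaustive
forcing colors all of `V(G)` blue. -/
def IsMixedLeakyForcingSet (G : SimpleGraph V) (ℓ : ℕ) (B : Set V) : Prop :=
  ∀ (L₁ : Finset V) (L₂ : Finset (Sym2 V)) (L₃ : Finset (V × V)),
    ↑L₂ ⊆ G.edgeSet → (∀ p ∈ L₃, G.Adj p.1 p.2) →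
    L₁.card + L₂.card + L₃.card ≤ ℓ →
    closureSet G (vertexLeaks ↑L₁ ∪ edgeLeaksP ↑L₂ ∪ (↑L₃ : Set (V × V))) B = Set.univ

/-- A chronologically valid list of forces starting from a blue set. -/
def ValidList (G : SimpleGraph V) (P : Set (V × V)) : Set V → List (V × V) → Prop
  | _, [] => True
  | S, f :: l => CanForce G P S f.1 f.2 ∧ ValidList G P (insert f.2 S) l

/-- `F` is a forcing process (set of forces) of `B` in `G` with prohibited
forces `P`: the forces of `F` admit a chronological ordering in which each force
is valid and after applying all of them the whole graph is blue. -/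
def IsForcingProcess (G : SimpleGraph V) (P : Set (V × V)) (B : Set V)
    (F : Set (V × V)) : Prop :=
  ∃ l : List (V × V), {f | f ∈ l} = F ∧ ValidList G P B l ∧
    B ∪ Prod.snd '' F = Set.univ

/-- `B'` is obtained from `B` using `F`: `B` can color exactly `B'` blue using
only a subset of the forces in `F`, applied in a chronologically valid order. -/
def ObtainedUsing (G : SimpleGraph V) (P : Set (V × V)) (B : Set V) (F : Set (V × V))
    (B' : Set V) : Prop :=
  ∃ l : List (V × V), (∀ f ∈ l, f ∈ F) ∧ ValidList G P B l ∧
    B' = B ∪ Prod.snd '' {f | f ∈ l}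

/-- `ℱ_P(B)`: the set of forces that belong to some forcing process of `B`
(with prohibited forces `P`). -/
def potentialForces (G : SimpleGraph V) (P : Set (V × V)) (B : Set V) : Set (V × V) :=
  {f | ∃ F, IsForcingProcess G P B F ∧ f ∈ F}

/-- `Z_(ℓ)(G)`, the `ℓ`-leaky forcing number of `G`. -/
noncomputable def Zleaky (G : SimpleGraph V) (ℓ : ℕ) : ℕ :=
  sInf {n | ∃ B : Finset V, B.card = n ∧ IsLeakyForcingSet G ℓ ↑B}

/-- `Z'_(ℓ)(G)`, the `ℓ`-edge-leaky forcing number of `G`. -/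
noncomputable def ZedgeLeaky (G : SimpleGraph V) (ℓ : ℕ) : ℕ :=
  sInf {n | ∃ B : Finset V, B.card = n ∧ IsEdgeLeakyForcingSet G ℓ ↑B}

/-- `Z^s_(ℓ)(G)`, the specified `ℓ`-leaky forcing number of `G`. -/
noncomputable def Zspec (G : SimpleGraph V) (ℓ : ℕ) : ℕ :=
  sInf {n | ∃ B : Finset V, B.card = n ∧ IsSpecifiedLeakyForcingSet G ℓ ↑B}

/-- `Z^m_(ℓ)(G)`, the mixed `ℓ`-leaky forcing number of `G`. -/
noncomputable def Zmixed (G : SimpleGraph V) (ℓ : ℕ) : ℕ :=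
  sInf {n | ∃ B : Finset V, B.card = n ∧ IsMixedLeakyForcingSet G ℓ ↑B}

/-- Two sets of specified leaks on `V(G)` are isomorphic if some bijection of
the vertex set matches them up. -/
def LeaksIso (L₁ L₂ : Set (V × V)) : Prop :=
  ∃ φ : V ≃ V, ∀ x y : V, (x, y) ∈ L₁ ↔ (φ x, φ y) ∈ L₂

/-- `B` is an `L`-leaky forcing set of `G`: `B` colors all of `V(G)` blue
despite any set of specified leaks isomorphic to a subset of `L`. -/
def IsLLeakyForcingSet (G : SimpleGraph V) (L : Set (V × V)) (B : Set V) : Prop :=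
  ∀ L' : Set (V × V), (∃ L₂ ⊆ L, LeaksIso L' L₂) → closureSet G L' B = Set.univ

/-- `L` is a set of independent leaks: `|T(L)| = |L|` and `T(L) ∩ H(L) = ∅`. -/
def IsIndependentLeaks [DecidableEq V] (L : Finset (V × V)) : Prop :=
  (L.image Prod.fst).card = L.card ∧ Disjoint (L.image Prod.fst) (L.image Prod.snd)

/-- `I(L)`: the size of a largest set of independent leaks contained in `L`. -/
noncomputable def maxIndepLeaks [DecidableEq V] (L : Finset (V × V)) : ℕ :=
  sSup {n | ∃ M ⊆ L, IsIndependentLeaks M ∧ M.card = n}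

/-- `Z_L(G)`, the `L`-leaky forcing number of `G`. -/
noncomputable def ZLleaky (G : SimpleGraph V) (L : Set (V × V)) : ℕ :=
  sInf {n | ∃ B : Finset V, B.card = n ∧ IsLLeakyForcingSet G L ↑B}

/-!
Call a force *available* in a blue set `T` if the color change rule without leaks permits it. The
closure of `B` under leaks `P` is the least `T ⊇ B` all of whose available forces lie in `P`. A
vertex has at most one available force, and distinct available forces cross distinct edges, so
vertex leaks and edge leaks are equally good at stalling `T`: in both cases one leak per available
force is what it takes. Hence `ℓ`-edge-leaky and `ℓ`-leaky forcing sets coincide.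

It remains to compare `ℓ + 1` vertex leaks with `ℓ`. If `B` resists `ℓ + 1` of them, then a force
`x → v` obtained under the leaks `L` can be avoided by leaking `x` too, which yields a second force
into `v`. Conversely, if `ℓ + 1` leaks stall a proper set `T`, then `T` has an available force
`u → w`, since `B` forces in the absence of leaks. Retract the leak at `u`: now `u → w` is the only
way out of `T`, so no vertex other than `u` can force `w`.
-/

section AvailableForces

variable {G : SimpleGraph V} {P : Set (V × V)} {B S T : Set V} {f : V × V} {ℓ : ℕ}

/-- The forces that the color change rule without leaks permits when exactly `S` is blue. -/
def availableForces (G : SimpleGraph V) (S : Set V) : Set (V × V) :=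
  {f | CanForce G ∅ S f.1 f.2}

theorem canForce_iff {u v : V} :
    CanForce G P S u v ↔ (u, v) ∈ availableForces G S ∧ (u, v) ∉ P := by
  simp only [availableForces, CanForce, Set.mem_ofPred_eq, Set.mem_empty_iff_false,
    not_false_eq_true, and_true, and_assoc]

theorem injOn_fst_availableForces : Set.InjOn Prod.fst (availableForces G S) := by
  rintro ⟨u, v⟩ ⟨_, hv, huv, _⟩ ⟨u', v'⟩ ⟨_, _, _, hall, _⟩ (rfl : u = u')
  by_contra hne
  exact hv (hall v huv fun h => hne (Prod.ext rfl h))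

theorem injOn_sym2Mk_availableForces :
    Set.InjOn (fun f : V × V => s(f.1, f.2)) (availableForces G S) := by
  rintro ⟨u, v⟩ ⟨hu, _⟩ ⟨u', v'⟩ ⟨_, hv', _⟩ h
  rcases Sym2.eq_iff.1 h with ⟨hu', hv⟩ | ⟨huv', _⟩
  · exact Prod.ext hu' hv
  · exact absurd (huv' ▸ hu) hv'

theorem subset_closureSet : B ⊆ closureSet G P B := fun _ => Forced.init

theorem availableForces_closureSet_subset : availableForces G (closureSet G P B) ⊆ P := by
  rintro ⟨u, v⟩ ⟨hu, hv, huv, hall, _⟩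
  by_contra hP
  exact hv (Forced.force huv hP hu hall)

theorem closureSet_subset (hB : B ⊆ T) (hT : availableForces G T ⊆ P) :
    closureSet G P B ⊆ T := by
  intro v hv
  induction hv with
  | init h => exact hB h
  | @force u v huv hP _ _ hu hall =>
    by_contra hv
    exact hP (hT ⟨hu, hv, huv, hall, Set.notMem_empty _⟩)

theorem closureSet_mono (h : S ⊆ T) : closureSet G P S ⊆ closureSet G P T :=
  closureSet_subset (h.trans subset_closureSet) availableForces_closureSet_subset

theorem eq_univ_of_availableForces_subset (h : closureSet G P B = Set.univ) (hB : B ⊆ T)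
    (hT : availableForces G T ⊆ P) : T = Set.univ :=
  Set.univ_subset_iff.1 (h ▸ closureSet_subset hB hT)

theorem exists_canForce (h : closureSet G P S = Set.univ) (hS : S ≠ Set.univ) :
    ∃ f : V × V, CanForce G P S f.1 f.2 := by
  by_contra! hstuck
  refine hS (eq_univ_of_availableForces_subset h subset_rfl fun f hf => ?_)
  by_contra hP
  exact hstuck f (canForce_iff.2 ⟨hf, hP⟩)

theorem availableForces_subset_insert_vertexLeaks_erase [DecidableEq V] {L : Finset V}
    (hT : availableForces G T ⊆ vertexLeaks ↑L) (hf : f ∈ availableForces G T) :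
    availableForces G T ⊆ insert f (vertexLeaks ↑(L.erase f.1)) := by
  intro g hg
  by_cases hgf : g.1 = f.1
  · exact Or.inl (injOn_fst_availableForces hg hf hgf)
  · exact Or.inr (Finset.mem_coe.2 (Finset.mem_erase.2 ⟨hgf, hT hg⟩))

/-- Covers vertex and edge leaks at once: `e f` is the leak that blocks the force `f`, and `A` is
the set of permitted leaks. -/
theorem forall_closureSet_preimage_eq_univ_iff {α : Type*} {e : V × V → α} {A : Set α}
    (hinj : ∀ T, Set.InjOn e (availableForces G T))
    (hmaps : ∀ T, Set.MapsTo e (availableForces G T) A) :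
    (∀ L : Finset α, ↑L ⊆ A → L.card ≤ ℓ → closureSet G (e ⁻¹' ↑L) B = Set.univ) ↔
      ∀ T, B ⊆ T → (availableForces G T).encard ≤ ℓ → T = Set.univ := by
  constructor
  · intro h T hBT hcard
    have hfin : (e '' availableForces G T).Finite := (Set.finite_of_encard_le_coe hcard).image e
    refine eq_univ_of_availableForces_subset (h hfin.toFinset ?_ ?_) hBT ?_
    · simpa only [hfin.coe_toFinset] using (hmaps T).image_subset
    · rw [← Nat.cast_le (α := ℕ∞), ← Set.encard_coe_eq_coe_finsetCard, hfin.coe_toFinset]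
      exact (Set.encard_image_le e _).trans hcard
    · rw [hfin.coe_toFinset]
      exact Set.subset_preimage_image e _
  · intro h L _ hcard
    refine h _ subset_closureSet ?_
    calc (availableForces G (closureSet G (e ⁻¹' ↑L) B)).encard
        ≤ (L : Set α).encard :=
          Set.encard_le_encard_of_injOn availableForces_closureSet_subset (hinj _)
      _ ≤ ℓ := by rw [Set.encard_coe_eq_coe_finsetCard]; exact_mod_cast hcard

theorem isLeakyForcingSet_iff_encard_availableForces :
    IsLeakyForcingSet G ℓ B ↔
      ∀ T, B ⊆ T → (availableForces G T).encard ≤ ℓ → T = Set.univ := by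
  rw [← forall_closureSet_preimage_eq_univ_iff (e := Prod.fst) (A := Set.univ)
    (fun _ => injOn_fst_availableForces) fun _ => Set.mapsTo_univ _ _]
  exact forall_congr' fun L => ⟨fun h _ => h, fun h => h (Set.subset_univ _)⟩

theorem isEdgeLeakyForcingSet_iff_encard_availableForces :
    IsEdgeLeakyForcingSet G ℓ B ↔
      ∀ T, B ⊆ T → (availableForces G T).encard ≤ ℓ → T = Set.univ :=
  forall_closureSet_preimage_eq_univ_iff (e := fun f => s(f.1, f.2))
    (fun _ => injOn_sym2Mk_availableForces) fun _ _ hf => hf.2.2.1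

theorem isEdgeLeakyForcingSet_iff_isLeakyForcingSet :
    IsEdgeLeakyForcingSet G ℓ B ↔ IsLeakyForcingSet G ℓ B :=
  isEdgeLeakyForcingSet_iff_encard_availableForces.trans
    isLeakyForcingSet_iff_encard_availableForces.symm

end AvailableForces

section ValidList

variable {G : SimpleGraph V} {P Q : Set (V × V)} {S T : Set V} {l : List (V × V)} {f g : V × V}

theorem ValidList.of_subset (hPQ : P ⊆ Q) (hl : ValidList G Q S l) : ValidList G P S l := by
  induction l generalizing S with
  | nil => trivial
  | cons f l ih =>
    obtain ⟨⟨hu, hv, huv, hall, hQ⟩, hl⟩ := hl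
    exact ⟨⟨hu, hv, huv, hall, fun hP => hQ (hPQ hP)⟩, ih hl⟩

theorem ValidList.notMem_prohibited (hl : ValidList G P S l) (hf : f ∈ l) : f ∉ P := by
  induction l generalizing S with
  | nil => exact absurd hf List.not_mem_nil
  | cons g l ih =>
    rcases List.mem_cons.1 hf with rfl | hf
    · exact (canForce_iff.1 hl.1).2
    · exact ih hl.2 hf

theorem ValidList.snd_notMem (hl : ValidList G P S l) (hf : f ∈ l) : f.2 ∉ S := by
  induction l generalizing S with
  | nil => exact absurd hf List.not_mem_nil
  | cons g l ih =>
    rcases List.mem_cons.1 hf with rfl | hf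
    · exact hl.1.2.1
    · exact fun h => ih hl.2 hf (Set.mem_insert_of_mem _ h)

theorem ValidList.injOn_snd (hl : ValidList G P S l) : Set.InjOn Prod.snd {f | f ∈ l} := by
  induction l generalizing S with
  | nil => exact fun f hf => absurd hf List.not_mem_nil
  | cons a l ih =>
    have head_ne {f : V × V} (hf : f ∈ l) : f.2 ≠ a.2 := fun h =>
      hl.2.snd_notMem hf (h ▸ Set.mem_insert _ _)
    intro f hf g hg hfg
    rcases List.mem_cons.1 hf with rfl | hfl <;> rcases List.mem_cons.1 hg with rfl | hgl
    · rfl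
    · exact absurd hfg.symm (head_ne hgl)
    · exact absurd hfg (head_ne hfl)
    · exact ih hl.2 hfl hgl hfg

theorem ValidList.exists_mem_availableForces (hl : ValidList G P S l) (hST : S ⊆ T) (hg : g ∈ l)
    (hgT : g.2 ∉ T) : ∃ f ∈ l, f ∈ availableForces G T := by
  induction l generalizing S with
  | nil => exact absurd hg List.not_mem_nil
  | cons a l ih =>
    obtain ⟨⟨hu, _, huv, hall, _⟩, hl⟩ := hl
    by_cases haT : a.2 ∈ T
    · have hg : g ∈ l := (List.mem_cons.1 hg).resolve_left fun h => hgT (h ▸ haT)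
      obtain ⟨f, hf, hfT⟩ := ih hl (Set.insert_subset haT hST) hg
      exact ⟨f, List.mem_cons_of_mem _ hf, hfT⟩
    · exact ⟨a, List.mem_cons_self,
        hST hu, haT, huv, fun w hw hne => hST (hall w hw hne), Set.notMem_empty _⟩

theorem ValidList.eq_of_availableForces_subset_insert (hl : ValidList G P S l) (hST : S ⊆ T)
    (hT : availableForces G T ⊆ insert f P) (hg : g ∈ l) (hgT : g.2 ∉ T) (hgf : g.2 = f.2) :
    g = f := by
  obtain ⟨a, ha, haT⟩ := hl.exists_mem_availableForces hST hg hgT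
  obtain rfl : a = f := (hT haT).resolve_right (hl.notMem_prohibited ha)
  exact hl.injOn_snd hg ha hgf

theorem exists_validList_of_closureSet_eq_univ {S : Set V} (hS : Sᶜ.Finite)
    (h : closureSet G P S = Set.univ) :
    ∃ l, ValidList G P S l ∧ S ∪ Prod.snd '' {f | f ∈ l} = Set.univ := by
  by_cases hne : S = Set.univ
  · exact ⟨[], trivial, by rw [hne, Set.univ_union]⟩
  obtain ⟨f, hf⟩ := exists_canForce h hne
  have hsub : (insert f.2 S)ᶜ ⊂ Sᶜ := compl_lt_compl_iff_lt.2 (Set.ssubset_insert hf.2.1)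
  obtain ⟨l, hl, hcover⟩ := exists_validList_of_closureSet_eq_univ (hS.subset hsub.subset)
    (Set.univ_subset_iff.1 (h ▸ closureSet_mono (Set.subset_insert f.2 S)))
  refine ⟨f :: l, ⟨hf, hl⟩, ?_⟩
  rw [← hcover]
  simp only [List.mem_cons, Set.ofPred_or, Set.ofPred_eq_eq_singleton, Set.singleton_union,
    Set.image_insert_eq, Set.insert_union, Set.union_insert]
termination_by Sᶜ.ncard
decreasing_by exact Set.ncard_lt_ncard hsub hS

end ValidList

section PotentialForces

variable {G : SimpleGraph V} {P Q : Set (V × V)} {B T : Set V} {f g : V × V} {ℓ : ℕ}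

theorem potentialForces_anti (h : P ⊆ Q) : potentialForces G Q B ⊆ potentialForces G P B := by
  rintro f ⟨F, ⟨l, hlF, hl, hcover⟩, hf⟩
  exact ⟨F, ⟨l, hlF, hl.of_subset h, hcover⟩, hf⟩

theorem notMem_of_mem_potentialForces (hf : f ∈ potentialForces G P B) : f ∉ P := by
  obtain ⟨_, ⟨l, rfl, hl, _⟩, hf⟩ := hf
  exact hl.notMem_prohibited hf

theorem exists_mem_potentialForces (hB : Bᶜ.Finite) (h : closureSet G P B = Set.univ) {v : V}
    (hv : v ∉ B) : ∃ x, (x, v) ∈ potentialForces G P B := by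
  obtain ⟨l, hl, hcover⟩ := exists_validList_of_closureSet_eq_univ hB h
  obtain ⟨⟨x, _⟩, hf, rfl⟩ := (hcover.ge (Set.mem_univ v)).resolve_left hv
  exact ⟨x, _, ⟨l, rfl, hl, hcover⟩, hf⟩

theorem eq_of_mem_potentialForces (hBT : B ⊆ T) (hT : availableForces G T ⊆ insert f P)
    (hg : g ∈ potentialForces G P B) (hgT : g.2 ∉ T) (hgf : g.2 = f.2) : g = f := by
  obtain ⟨_, ⟨l, rfl, hl, _⟩, hg⟩ := hg
  exact hl.eq_of_availableForces_subset_insert hBT hT hg hgT hgf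

theorem IsLeakyForcingSet.exists_two_potentialForces (hB : Bᶜ.Finite)
    (h : IsLeakyForcingSet G (ℓ + 1) B) {L : Finset V} (hL : L.card ≤ ℓ) {v : V} (hv : v ∉ B) :
    ∃ x y : V, x ≠ y ∧ (x, v) ∈ potentialForces G (vertexLeaks ↑L) B ∧
      (y, v) ∈ potentialForces G (vertexLeaks ↑L) B := by
  classical
  obtain ⟨x, hx⟩ := exists_mem_potentialForces hB (h L (hL.trans (Nat.le_succ ℓ))) hv
  have hcard : (insert x L).card ≤ ℓ + 1 :=
    (Finset.card_insert_le x L).trans (Nat.succ_le_succ hL)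
  obtain ⟨y, hy⟩ := exists_mem_potentialForces hB (h (insert x L) hcard) hv
  have hyx : y ∉ insert x L := notMem_of_mem_potentialForces hy
  have hsub : vertexLeaks ↑L ⊆ vertexLeaks (↑(insert x L) : Set V) :=
    fun _ hf => Finset.mem_insert_of_mem hf
  exact ⟨x, y, fun hxy => hyx (hxy ▸ Finset.mem_insert_self x L), hx, potentialForces_anti hsub hy⟩

theorem isLeakyForcingSet_succ_of_two_potentialForces (h : closureSet G ∅ B = Set.univ)
    (htwo : ∀ L : Finset V, L.card ≤ ℓ → ∀ v : V, v ∉ B →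
      ∃ x y : V, x ≠ y ∧ (x, v) ∈ potentialForces G (vertexLeaks ↑L) B ∧
        (y, v) ∈ potentialForces G (vertexLeaks ↑L) B) :
    IsLeakyForcingSet G (ℓ + 1) B := by
  classical
  intro L hL
  set T := closureSet G (vertexLeaks ↑L) B
  have hBT : B ⊆ T := subset_closureSet
  have hT : availableForces G T ⊆ vertexLeaks ↑L := availableForces_closureSet_subset
  rcases (availableForces G T).eq_empty_or_nonempty with hnone | ⟨⟨u, w⟩, huw⟩
  · exact eq_univ_of_availableForces_subset h hBT hnone.subset
  have hu : u ∈ L := hT huw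
  have hwT : w ∉ T := huw.2.1
  have hcard : (L.erase u).card ≤ ℓ := by
    rw [Finset.card_erase_of_mem hu]
    exact Nat.sub_le_of_le_add hL
  have only_u {x : V} (hx : (x, w) ∈ potentialForces G (vertexLeaks ↑(L.erase u)) B) : x = u :=
    congrArg Prod.fst (eq_of_mem_potentialForces hBT
      (availableForces_subset_insert_vertexLeaks_erase hT huw) hx hwT rfl)
  obtain ⟨x, y, hxy, hx, hy⟩ := htwo (L.erase u) hcard w fun hw => hwT (hBT hw)
  exact absurd ((only_u hx).trans (only_u hy).symm) hxy

end PotentialForces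

theorem statement5_general {G : SimpleGraph V} {ℓ : ℕ} {B : Set V} (hB : Bᶜ.Finite) :
    IsEdgeLeakyForcingSet G (ℓ + 1) B ↔
      (IsLeakyForcingSet G ℓ B ∧
        ∀ L : Finset V, L.card ≤ ℓ → ∀ v : V, v ∉ B →
          ∃ x y : V, x ≠ y ∧ (x, v) ∈ potentialForces G (vertexLeaks ↑L) B ∧
            (y, v) ∈ potentialForces G (vertexLeaks ↑L) B) := by
  rw [isEdgeLeakyForcingSet_iff_isLeakyForcingSet]
  constructor
  · intro h
    exact ⟨fun L hL => h L (hL.trans (Nat.le_succ ℓ)),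
      fun L hL v hv => h.exists_two_potentialForces hB hL hv⟩
  · rintro ⟨h, htwo⟩
    refine isLeakyForcingSet_succ_of_two_potentialForces ?_ htwo
    have hempty : vertexLeaks (↑(∅ : Finset V) : Set V) = ∅ :=
      Set.eq_empty_of_forall_notMem fun _ hf => Finset.notMem_empty _ hf
    exact hempty ▸ h ∅ (Nat.zero_le ℓ)

/-- Theorem `edgesetofforces`: `B` is an `ℓ`-edge-leaky
forcing set iff `B` is an `(ℓ-1)`-leaky forcing set (w.r.t. vertex leaks) such
that for every set `L` of `ℓ-1` vertex leaks and every `v ∈ V(G) \ B` there are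
two distinct forces `x→v, y→v ∈ ℱ_L(B)`. -/
theorem statement5 [Fintype V] [DecidableEq V] (G : SimpleGraph V) (ℓ : ℕ)
    (hℓ : 1 ≤ ℓ) (B : Set V) :
    IsEdgeLeakyForcingSet G ℓ B ↔
      (IsLeakyForcingSet G (ℓ - 1) B ∧
        ∀ L : Finset V, L.card ≤ ℓ - 1 → ∀ v : V, v ∉ B →
          ∃ x y : V, x ≠ y ∧ (x, v) ∈ potentialForces G (vertexLeaks ↑L) B ∧
            (y, v) ∈ potentialForces G (vertexLeaks ↑L) B) := by
  obtain ⟨k, rfl⟩ := Nat.exists_eq_add_of_le' hℓ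
  exact statement5_general (Set.toFinite Bᶜ)
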